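/- Let w ∈ W_n be a signed permutation. Let tw, wt ∈ W_n, so that the sequence (tw)⃗ is obtained from w⃗ = (w(1),…,w(n)) by changing the sign of the entry with absolute value 1, and (wt)⃗ is obtained from w⃗ by changing the sign of the first entry w(1). Then the partitions p(⁻w⃗), p(⁻(tw)⃗) and p(⁻(wt)⃗), viewed as Young diagrams, have the same number of even boxes in each row; that is, p(⁻w⃗)^ev = p(⁻(tw)⃗)^ev = p(⁻(wt)⃗)^ev. -/

import Mathlib

/-- Greene invariant `c_k(x)` of the length-`N` sequence `x` (positions `1,…,N`). -/
noncomputable def greeneC {α : Type*} [LinearOrder α] (N : ℕ) (x : ℕ → α) (k : ℕ) : ℕ :=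
  sSup {m : ℕ | ∃ S : Finset ℕ, (∀ i ∈ S, 1 ≤ i ∧ i ≤ N) ∧ m = S.card ∧
    ∃ f : ℕ → Fin k, ∀ i ∈ S, ∀ j ∈ S, i < j → f i = f j → x i ≤ x j}

/-- The Robinson–Schensted shape of `x`, via Greene's theorem:
`p(x)_k = c_k(x) − c_{k−1}(x)`. -/
noncomputable def rsShape {α : Type*} [LinearOrder α] (N : ℕ) (x : ℕ → α) (k : ℕ) : ℕ :=
  greeneC N x k - greeneC N x (k - 1)

/-- The number of even boxes in row `i` of the Young diagram of `p`:
boxes `(i,j)` with `1 ≤ j ≤ p i` and `i + j` even. -/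
def rowEv (p : ℕ → ℕ) (i : ℕ) : ℕ :=
  ((Finset.Icc 1 (p i)).filter fun j => Even (i + j)).card

/-- For a length-`n` sequence `x` (positions `1,…,n`), the length-`2n` sequence
`⁻x = (−x_n,…,−x_1,x_1,…,x_n)` (positions `1,…,2n`). -/
def preMinus (n : ℕ) (x : ℕ → ℤ) : ℕ → ℤ := fun i =>
  if i ≤ n then -x (n + 1 - i) else x (i - n)

/-- `w` is an element of the group `W_n` of signed permutations: a permutation of `ℤ`
with `w(−i) = −w(i)` mapping `{1,…,n}` into `{±1,…,±n}`. -/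
def IsSignedPerm (n : ℕ) (w : Equiv.Perm ℤ) : Prop :=
  (∀ i : ℤ, w (-i) = -w i) ∧ ∀ i : ℤ, 1 ≤ i → i ≤ (n : ℤ) → 1 ≤ |w i| ∧ |w i| ≤ (n : ℤ)

/-!
The two sign changes are exchanged by `w ↦ w⁻¹`, which preserves the shape, so it suffices to swap
the two central entries `-a < a` of an antisymmetric sequence `y`.

By Greene's theorem, `c_k(y)` is the largest number of jumps at the points of the graph of `y` of a
monotone height function with values in `0, …, k`. When `-a` and `a` are swapped, `c_k` drops by at
most `1`; it drops exactly when every optimal height function has a *central step*, from some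
`r - 1` to `r`, at the two central points. The number of jumps is supermodular, so optimal functions
`f` for `k` and `g` for `k ± 1` can be exchanged for the maximum and minimum of their shifts, which
forces `g` to be within one of the central step of `f`. The antisymmetry of `y` reflects a central
step `r` of `f` to a central step `k + 1 - r`, and for even `k` these are distinct, so that `g` has
a central step as well. Hence a drop of `c_k` for an even `k` comes with a drop of `c_{k - 1}` and
`c_{k + 1}`.

The same holds for the column sums of the shape, which by Greene's theorem are the invariants of the
negated sequence. Therefore in each row the two shapes differ by at most one box, and comparing rows
and columns shows that the coordinates of this box have different parities.

That rows and columns determine one another is the Greene–Kleitman theorem. It is obtained from the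
duality of the assignment problem (Egerváry's theorem): an optimal assignment gives a family of `k`
increasing subsequences, and optimal potentials give a family of decreasing ones.
-/

namespace HollowTableau

section Egervary

variable {ι : Type*}

/-- Dual feasibility for the assignment problem with costs `c` in which only the pairs related by
`r` may be matched. -/
def IsDualFeasible (r : ι → ι → Prop) (c : ι → ι → ℤ) (u v : ι → ℤ) : Prop :=
  ∀ i j, r i j → u i + v j ≤ c i j

lemma exists_isDualFeasible [Finite ι] (r : ι → ι → Prop) (c : ι → ι → ℤ) :
    ∃ u v, IsDualFeasible r c u v := by
  have := Fintype.ofFinite ι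
  refine ⟨fun i => -∑ j, |c i j|, 0, fun i j _ => ?_⟩
  have hj : |c i j| ≤ ∑ j, |c i j| :=
    Finset.single_le_sum (f := fun j => |c i j|) (fun _ _ => abs_nonneg _) (Finset.mem_univ j)
  have := neg_abs_le (c i j)
  simp only [Pi.zero_apply]
  omega

lemma IsDualFeasible.sum_le [Fintype ι] {r : ι → ι → Prop} {c : ι → ι → ℤ} {u v : ι → ℤ}
    (h : IsDualFeasible r c u v) (hr : ∀ i, r i i) : ∑ i, (u i + v i) ≤ ∑ i, c i i :=
  Finset.sum_le_sum fun i _ => h i i (hr i)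

open Classical in
/-- The `j` that may be matched with `i` at no slack in the dual potentials `u`, `v`. -/
noncomputable def tightNeighbors [Fintype ι] (r : ι → ι → Prop) (c : ι → ι → ℤ) (u v : ι → ℤ)
    (i : ι) : Finset ι :=
  {j | r i j ∧ u i + v j = c i j}

lemma IsDualFeasible.exists_sum_lt [Fintype ι] [DecidableEq ι] {r : ι → ι → Prop}
    {c : ι → ι → ℤ} {u v : ι → ℤ} (h : IsDualFeasible r c u v) {s : Finset ι}
    (hs : (s.biUnion (tightNeighbors r c u v)).card < s.card) :
    ∃ u' v', IsDualFeasible r c u' v' ∧ ∑ i, (u i + v i) < ∑ i, (u' i + v' i) := by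
  set t := s.biUnion (tightNeighbors r c u v)
  refine ⟨fun i => u i + if i ∈ s then 1 else 0, fun j => v j - if j ∈ t then 1 else 0,
    fun i j hij => ?_, ?_⟩
  · have huv := h i j hij
    have hslack : i ∈ s → j ∉ t → u i + v j ≠ c i j := fun hi hj heq =>
      hj (Finset.mem_biUnion.2 ⟨i, hi, by simp [tightNeighbors, hij, heq]⟩)
    by_cases hi : i ∈ s <;> by_cases hj : j ∈ t <;> simp only [hi, hj, if_true, if_false] <;> grind
  · have : (t.card : ℤ) < s.card := by exact_mod_cast hs
    simp only [Finset.sum_add_distrib, Finset.sum_sub_distrib, Finset.sum_ite_mem,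
      Finset.univ_inter, Finset.sum_const, nsmul_eq_mul, mul_one]
    linarith

/- Egerváry's theorem: by Hall's theorem, potentials of maximal total value admit a tight perfect
matching. -/
theorem exists_isDualFeasible_perm [Finite ι] {r : ι → ι → Prop} (hr : ∀ i, r i i)
    (c : ι → ι → ℤ) :
    ∃ u v, IsDualFeasible r c u v ∧
      ∃ σ : Equiv.Perm ι, ∀ i, r i (σ i) ∧ u i + v (σ i) = c i (σ i) := by
  classical
  have := Fintype.ofFinite ι
  obtain ⟨_, ⟨u, v, huv, rfl⟩, hmax⟩ := Int.exists_greatest_of_bdd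
    (P := fun z => ∃ u v, IsDualFeasible r c u v ∧ ∑ i, (u i + v i) = z)
    ⟨∑ i, c i i, fun _ ⟨u, v, huv, hz⟩ => hz ▸ huv.sum_le hr⟩
    (let ⟨u, v, huv⟩ := exists_isDualFeasible r c; ⟨_, u, v, huv, rfl⟩)
  have hall : ∀ s : Finset ι, s.card ≤ (s.biUnion (tightNeighbors r c u v)).card := by
    intro s
    by_contra! hs
    obtain ⟨u', v', huv', hlt⟩ := huv.exists_sum_lt hs
    exact absurd (hmax _ ⟨u', v', huv', rfl⟩) (not_le.2 hlt)
  obtain ⟨f, hinj, hf⟩ := (Finset.all_card_le_biUnion_card_iff_exists_injective _).1 hall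
  refine ⟨u, v, huv, Equiv.ofBijective f (Finite.injective_iff_bijective.1 hinj), fun i => ?_⟩
  simpa [tightNeighbors] using hf i

end Egervary

section GreeneKleitman

variable {P : Type*} {r : P → P → Prop} {k : ℕ}

/-- The arcs of the assignment problem for covering a poset by `k` chains: a perfect matching
consists of at most `k` chains of `r`, closed up through the `k` extra vertices, and of loops at the
elements of the poset which are not covered. -/
def ChainArc (r : P → P → Prop) (k : ℕ) : P ⊕ Fin k → P ⊕ Fin k → Prop
  | .inl p, .inl q => p = q ∨ r p q
  | _, _ => True

open Classical in
/-- The loops at elements of the poset cost `1`, the other arcs are free. -/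
noncomputable def loopCost (k : ℕ) : P ⊕ Fin k → P ⊕ Fin k → ℤ
  | .inl p, .inl q => if p = q then 1 else 0
  | _, _ => 0

lemma chainArc_refl (x : P ⊕ Fin k) : ChainArc r k x x := by
  cases x <;> simp [ChainArc]

variable [Fintype P]

open Classical in
/-- The elements of the poset covered by the chains of a matching. -/
noncomputable def covered (σ : Equiv.Perm (P ⊕ Fin k)) : Finset P :=
  {p | σ (.inl p) ≠ .inl p}

lemma sum_loopCost (σ : Equiv.Perm (P ⊕ Fin k)) :
    ∑ x, loopCost k x (σ x) = Fintype.card P - (covered σ).card := by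
  classical
  have hloop : ∀ p, loopCost k (.inl p) (σ (.inl p)) = 1 - if p ∈ covered σ then 1 else 0 := by
    intro p
    rcases hq : σ (.inl p) with q | e
    · by_cases h : p = q
      · subst h
        simp [covered, loopCost, hq]
      · simp [covered, loopCost, hq, h, Ne.symm h]
    · simp [covered, loopCost, hq]
  have hextra : ∀ e, loopCost k (.inr e : P ⊕ Fin k) (σ (.inr e)) = 0 := fun _ => rfl
  simp [Fintype.sum_sum_type, hloop, hextra]

/- The arcs of `σ` starting above an antichain `T` of covered elements end strictly above `T` or
at an extra vertex. -/
lemma card_antichain_le [IsStrictOrder P r] {σ : Equiv.Perm (P ⊕ Fin k)}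
    (hσ : ∀ x, ChainArc r k x (σ x)) {T : Finset P} (hT : T ⊆ covered σ)
    (hanti : ∀ p ∈ T, ∀ q ∈ T, ¬ r p q) : T.card ≤ k := by
  classical
  set W := (covered σ).filter fun p => ∃ t ∈ T, t = p ∨ r t p with hW
  have hTW : T ⊆ W := fun t ht => Finset.mem_filter.2 ⟨hT ht, t, ht, .inl rfl⟩
  have hmaps : ∀ p ∈ W, σ (.inl p) ∈ (W \ T).disjSum (Finset.univ : Finset (Fin k)) := by
    intro p hp
    obtain ⟨hcov, t, ht, htp⟩ := Finset.mem_filter.1 hp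
    have hne : σ (.inl p) ≠ .inl p := by simpa [covered] using hcov
    have harc := hσ (.inl p)
    rcases hq : σ (.inl p) with q | e
    · have hpq : p ≠ q := fun h => hne (h ▸ hq)
      rw [hq] at harc
      have hrpq : r p q := harc.resolve_left hpq
      have hrtq : r t q := htp.elim (fun h => h ▸ hrpq) fun h => _root_.trans h hrpq
      have hqcov : q ∈ covered σ := by
        simpa [covered] using fun h => hpq (Sum.inl_injective (σ.injective (hq.trans h.symm)))
      simpa [hW, hqcov] using ⟨⟨t, ht, Or.inr hrtq⟩, fun hqT => hanti t ht q hqT hrtq⟩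
    · simp
  have hcard := Finset.card_le_card_of_injOn (fun p => σ (.inl p)) hmaps
    (σ.injective.comp Sum.inl_injective).injOn
  rw [Finset.card_disjSum, Finset.card_univ, Fintype.card_fin, Finset.card_sdiff_of_subset hTW]
    at hcard
  have := Finset.card_le_card hTW
  omega

/- In the dual solution the elements `p` with `u p + v p = 1` are coloured by `u p`: an arc between
two elements of the same colour would violate dual feasibility. -/
lemma exists_antichain_family {k : ℕ} (hk : 0 < k) {u v : P ⊕ Fin k → ℤ}
    (huv : IsDualFeasible (ChainArc r k) (loopCost k) u v) (hirr : ∀ p, ¬ r p p) :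
    ∃ (l : ℕ) (A : Finset P) (f : P → ℕ), (∀ p ∈ A, f p < l) ∧
      (∀ p ∈ A, ∀ q ∈ A, f p = f q → ¬ r p q) ∧ ∑ x, (u x + v x) + k * l ≤ A.card := by
  have : Nonempty (Fin k) := ⟨⟨0, hk⟩⟩
  obtain ⟨a, ha⟩ := Finite.exists_max fun e : Fin k => u (.inr e)
  obtain ⟨b, hb⟩ := Finite.exists_max fun e : Fin k => v (.inr e)
  set U := u (.inr a)
  set V := v (.inr b)
  have hUV : U + V ≤ 0 := huv (.inr a) (.inr b) trivial
  have hu : ∀ p, u (.inl p) + V ≤ 0 := fun p => huv (.inl p) (.inr b) trivial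
  have hv : ∀ p, U + v (.inl p) ≤ 0 := fun p => huv (.inr a) (.inl p) trivial
  have hloop : ∀ p, u (.inl p) + v (.inl p) ≤ 1 := fun p => by
    simpa [loopCost] using huv (.inl p) (.inl p) (.inl rfl)
  have harc : ∀ p q, r p q → u (.inl p) + v (.inl q) ≤ 0 := fun p q hpq => by
    have hne : p ≠ q := fun h => hirr q (h ▸ hpq)
    simpa [loopCost, hne] using huv (.inl p) (.inl q) (.inr hpq)
  refine ⟨(-(U + V)).toNat, Finset.univ.filter fun p => u (.inl p) + v (.inl p) = 1,
    fun p => (u (.inl p) - 1 - U).toNat, fun p hp => ?_, fun p hp q hq hpq hr => ?_, ?_⟩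
  · have := (Finset.mem_filter.1 hp).2
    grind
  · have := (Finset.mem_filter.1 hp).2
    have := (Finset.mem_filter.1 hq).2
    grind
  · have hP : ∑ p, (u (.inl p) + v (.inl p)) ≤
        (Finset.univ.filter fun p => u (.inl p) + v (.inl p) = 1).card := by
      rw [Finset.card_filter, Nat.cast_sum]
      exact Finset.sum_le_sum fun p _ => by have := hloop p; split_ifs <;> grind
    have hE : ∑ e : Fin k, (u (.inr e) + v (.inr e)) ≤ k * (U + V) := by
      simpa using Finset.sum_le_card_nsmul Finset.univ (fun e : Fin k => u (.inr e) + v (.inr e))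
        (U + V) fun e _ => add_le_add (ha e) (hb e)
    rw [Fintype.sum_sum_type, Int.toNat_of_nonneg (by omega)]
    linarith

theorem exists_chain_antichain_families [IsStrictOrder P r] (hk : 0 < k) :
    ∃ (l : ℕ) (S A : Finset P) (f : P → ℕ),
      (∀ T ⊆ S, (∀ p ∈ T, ∀ q ∈ T, ¬ r p q) → T.card ≤ k) ∧ (∀ p ∈ A, f p < l) ∧
      (∀ p ∈ A, ∀ q ∈ A, f p = f q → ¬ r p q) ∧ Fintype.card P + k * l ≤ S.card + A.card := by
  obtain ⟨u, v, huv, σ, hσ⟩ :=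
    exists_isDualFeasible_perm (chainArc_refl (r := r) (k := k)) (loopCost k)
  obtain ⟨l, A, f, hfl, hf, hA⟩ := exists_antichain_family hk huv (irrefl_of r)
  refine ⟨l, covered σ, A, f, fun T hT hanti => card_antichain_le (fun x => (hσ x).1) hT hanti,
    hfl, hf, ?_⟩
  have hsum : ∑ x, (u x + v x) = Fintype.card P - (covered σ).card := by
    rw [← sum_loopCost σ, ← Finset.sum_congr rfl fun x _ => (hσ x).2]
    simp only [Finset.sum_add_distrib, Equiv.sum_comp]
  rw [hsum] at hA
  omega

end GreeneKleitman

section Families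

variable {α : Type*} [LinearOrder α] {N k : ℕ} {x : ℕ → α} {S : Finset ℕ} {f : ℕ → ℕ}

/-- The positions `S` of a length-`N` sequence `x`, partitioned by the colouring `f` into `k`
subsets that index weakly increasing subsequences. The colours are natural numbers, so that also
`k = 0` is allowed. -/
structure IsIncreasingFamily (N : ℕ) (x : ℕ → α) (k : ℕ) (S : Finset ℕ) (f : ℕ → ℕ) : Prop where
  subset : S ⊆ Finset.Icc 1 N
  lt : ∀ i ∈ S, f i < k
  le : ∀ i ∈ S, ∀ j ∈ S, i < j → f i = f j → x i ≤ x j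

lemma IsIncreasingFamily.card_le (h : IsIncreasingFamily N x k S f) : S.card ≤ N := by
  simpa using Finset.card_le_card h.subset

lemma isIncreasingFamily_empty (N : ℕ) (x : ℕ → α) (k : ℕ) (f : ℕ → ℕ) :
    IsIncreasingFamily N x k ∅ f :=
  ⟨by simp, by simp, by simp⟩

lemma isIncreasingFamily_zero_iff : IsIncreasingFamily N x 0 S f ↔ S = ∅ := by
  refine ⟨fun h => Finset.eq_empty_of_forall_notMem fun i hi => Nat.not_lt_zero _ (h.lt i hi), ?_⟩
  rintro rfl
  exact isIncreasingFamily_empty N x 0 f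

lemma greeneC_zero (N : ℕ) (x : ℕ → α) : greeneC N x 0 = 0 := by
  have : IsEmpty (ℕ → Fin 0) := ⟨fun f => (f 0).elim0⟩
  simp [greeneC]

lemma greeneC_eq_sSup (N : ℕ) (x : ℕ → α) (k : ℕ) :
    greeneC N x k = sSup {m | ∃ S f, IsIncreasingFamily N x k S f ∧ S.card = m} := by
  rcases k.eq_zero_or_pos with rfl | hk
  · simp [greeneC_zero, isIncreasingFamily_zero_iff]
  refine congrArg sSup (Set.ext fun m => ⟨?_, ?_⟩)
  · rintro ⟨S, hS, rfl, f, hf⟩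
    exact ⟨S, fun i => f i, ⟨fun i hi => Finset.mem_Icc.2 (hS i hi), fun i _ => (f i).2,
      fun i hi j hj hij he => hf i hi j hj hij (Fin.ext he)⟩, rfl⟩
  · rintro ⟨S, f, h, rfl⟩
    refine ⟨S, fun i hi => Finset.mem_Icc.1 (h.subset hi), rfl,
      fun i => ⟨f i % k, Nat.mod_lt _ hk⟩, fun i hi j hj hij he => h.le i hi j hj hij ?_⟩
    simpa [Nat.mod_eq_of_lt (h.lt i hi), Nat.mod_eq_of_lt (h.lt j hj)] using he

lemma bddAbove_card_isIncreasingFamily (N : ℕ) (x : ℕ → α) (k : ℕ) :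
    BddAbove {m | ∃ S f, IsIncreasingFamily N x k S f ∧ S.card = m} :=
  ⟨N, fun _ ⟨_, _, h, hm⟩ => hm ▸ h.card_le⟩

lemma IsIncreasingFamily.card_le_greeneC (h : IsIncreasingFamily N x k S f) :
    S.card ≤ greeneC N x k := by
  rw [greeneC_eq_sSup]
  exact le_csSup (bddAbove_card_isIncreasingFamily N x k) ⟨S, f, h, rfl⟩

lemma exists_card_eq_greeneC (N : ℕ) (x : ℕ → α) (k : ℕ) :
    ∃ S f, IsIncreasingFamily N x k S f ∧ S.card = greeneC N x k := by
  rw [greeneC_eq_sSup]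
  exact Nat.sSup_mem (s := {m | ∃ S f, IsIncreasingFamily N x k S f ∧ S.card = m})
    ⟨0, ∅, id, isIncreasingFamily_empty N x k id, rfl⟩ (bddAbove_card_isIncreasingFamily N x k)

lemma greeneC_le_length (N : ℕ) (x : ℕ → α) (k : ℕ) : greeneC N x k ≤ N := by
  obtain ⟨S, f, h, hS⟩ := exists_card_eq_greeneC N x k
  exact hS ▸ h.card_le

lemma length_le_greeneC_self (N : ℕ) (x : ℕ → α) : N ≤ greeneC N x N := by
  have h : IsIncreasingFamily N x N (Finset.Icc 1 N) fun i => i - 1 :=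
    ⟨subset_rfl, fun i hi => by grind, fun i hi j hj hij he => by grind⟩
  simpa using h.card_le_greeneC

/- Reading the values of an injective sequence as positions and vice versa, as for a permutation and
its inverse, turns increasing subsequences into increasing subsequences. -/
lemma greeneC_le_of_transpose {β : Type*} [LinearOrder β] {x' : ℕ → β} {φ : ℕ → ℕ}
    (hmaps : ∀ i ∈ Finset.Icc 1 N, φ i ∈ Finset.Icc 1 N)
    (hinj : Set.InjOn φ (Finset.Icc 1 N))
    (hφ : ∀ i ∈ Finset.Icc 1 N, ∀ j ∈ Finset.Icc 1 N, φ i < φ j → x i < x j)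
    (hx' : ∀ i ∈ Finset.Icc 1 N, ∀ j ∈ Finset.Icc 1 N, i ≤ j → x' (φ i) ≤ x' (φ j)) (k : ℕ) :
    greeneC N x k ≤ greeneC N x' k := by
  obtain ⟨S, f, h, hS⟩ := exists_card_eq_greeneC N x k
  have hinjS : Set.InjOn φ S := hinj.mono (Finset.coe_subset.2 h.subset)
  have hg : ∀ i ∈ S, f (Function.invFunOn φ S (φ i)) = f i := fun i hi =>
    congrArg f (hinjS.leftInvOn_invFunOn hi)
  have h' : IsIncreasingFamily N x' k (S.image φ) (f ∘ Function.invFunOn φ S) := by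
    refine ⟨?_, ?_, ?_⟩ <;> simp only [Finset.forall_mem_image, Finset.image_subset_iff,
      Function.comp_apply]
    · exact fun i hi => hmaps i (h.subset hi)
    · exact fun i hi => hg i hi ▸ h.lt i hi
    · intro i hi j hj hij he
      rw [hg i hi, hg j hj] at he
      have hlt := hφ i (h.subset hi) j (h.subset hj) hij
      refine hx' i (h.subset hi) j (h.subset hj) (le_of_not_gt fun hji => ?_)
      exact (h.le j hj i hi hji he.symm).not_gt hlt
  rw [← hS, ← Finset.card_image_of_injOn hinjS]
  exact h'.card_le_greeneC

end Families

section Heights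

variable {N k : ℕ} {x : ℕ → ℤ} {h : ℕ → ℤ → ℤ} {S : Finset ℕ} {f : ℕ → ℕ}

/-- A height function: decreasing in the position and increasing in the value. The typical example
is the length of the longest strictly decreasing subsequence to the right of a position and with
values at most a given one. -/
def IsHeight (h : ℕ → ℤ → ℤ) : Prop :=
  ∀ ⦃i j⦄ ⦃u v⦄, i ≤ j → u ≤ v → h j u ≤ h i v

/-- A height function with values in `0, …, k`; it encodes a family of `k` increasing
subsequences. -/
structure IsHeightUpTo (k : ℕ) (h : ℕ → ℤ → ℤ) : Prop where
  isHeight : IsHeight h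
  nonneg : ∀ i v, 0 ≤ h i v
  le : ∀ i v, h i v ≤ k

/-- The indicator of `b < a`. -/
def jump (b a : ℤ) : ℕ := if b < a then 1 else 0

/-- Whether the height function `h` increases at the point `(i, x i)` of the graph of `x`. -/
def jumpAt (x : ℕ → ℤ) (h : ℕ → ℤ → ℤ) (i : ℕ) : ℕ := jump (h i (x i - 1)) (h (i - 1) (x i))

/-- The number of points of the graph of a length-`N` sequence `x` at which `h` increases. -/
def jumps (N : ℕ) (x : ℕ → ℤ) (h : ℕ → ℤ → ℤ) : ℕ := ∑ i ∈ Finset.Icc 1 N, jumpAt x h i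

lemma IsHeightUpTo.isIncreasingFamily (hh : IsHeightUpTo k h) (N : ℕ) (x : ℕ → ℤ) :
    IsIncreasingFamily N x k {i ∈ Finset.Icc 1 N | h i (x i - 1) < h (i - 1) (x i)}
      fun i => (h i (x i - 1)).toNat := by
  refine ⟨Finset.filter_subset _ _, fun i _ => ?_, fun i _ j hj hij he => ?_⟩
  · have := hh.nonneg i (x i - 1)
    have := hh.le (i - 1) (x i)
    grind
  · by_contra! hlt
    have hle : h (j - 1) (x j) ≤ h i (x i - 1) := hh.isHeight (by omega) (by omega)
    have := hh.nonneg i (x i - 1)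
    have := hh.nonneg j (x j - 1)
    grind

lemma IsHeightUpTo.jumps_le_greeneC (hh : IsHeightUpTo k h) (N : ℕ) (x : ℕ → ℤ) :
    jumps N x h ≤ greeneC N x k := by
  have hle := (hh.isIncreasingFamily N x).card_le_greeneC
  rwa [Finset.card_filter] at hle

open Classical in
/-- The strictly decreasing subsequences of `x` with positions in `S` to the right of `i` and with
values at most `v`. -/
noncomputable def antiSubsets (x : ℕ → ℤ) (S : Finset ℕ) (i : ℕ) (v : ℤ) : Finset (Finset ℕ) :=
  S.powerset.filter fun T => StrictAntiOn x T ∧ ∀ t ∈ T, i < t ∧ x t ≤ v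

lemma mem_antiSubsets {T : Finset ℕ} {i : ℕ} {v : ℤ} :
    T ∈ antiSubsets x S i v ↔ T ⊆ S ∧ StrictAntiOn x T ∧ ∀ t ∈ T, i < t ∧ x t ≤ v := by
  simp [antiSubsets]

/-- The maximal length of a sequence in `antiSubsets x S i v`. -/
noncomputable def antiLength (x : ℕ → ℤ) (S : Finset ℕ) (i : ℕ) (v : ℤ) : ℕ :=
  (antiSubsets x S i v).sup Finset.card

lemma card_le_antiLength {T : Finset ℕ} {i : ℕ} {v : ℤ} (hTS : T ⊆ S) (hT : StrictAntiOn x T)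
    (hiv : ∀ t ∈ T, i < t ∧ x t ≤ v) : T.card ≤ antiLength x S i v :=
  Finset.le_sup (f := Finset.card) (mem_antiSubsets.2 ⟨hTS, hT, hiv⟩)

lemma exists_card_eq_antiLength (x : ℕ → ℤ) (S : Finset ℕ) (i : ℕ) (v : ℤ) :
    ∃ T ⊆ S, StrictAntiOn x T ∧ (∀ t ∈ T, i < t ∧ x t ≤ v) ∧ T.card = antiLength x S i v := by
  have hne : (antiSubsets x S i v).Nonempty := ⟨∅, mem_antiSubsets.2 (by simp [StrictAntiOn])⟩
  obtain ⟨T, hT, hcard⟩ := Finset.exists_mem_eq_sup _ hne Finset.card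
  obtain ⟨hTS, hanti, hiv⟩ := mem_antiSubsets.1 hT
  exact ⟨T, hTS, hanti, hiv, hcard.symm⟩

lemma isHeightUpTo_antiLength (hS : ∀ T ⊆ S, StrictAntiOn x T → T.card ≤ k) :
    IsHeightUpTo k fun i v => antiLength x S i v := by
  refine ⟨fun i j u v hij huv => ?_, fun i v => Nat.cast_nonneg _, fun i v => ?_⟩
  · obtain ⟨T, hTS, hT, hju, hcard⟩ := exists_card_eq_antiLength x S j u
    have := card_le_antiLength hTS hT fun t ht =>
      ⟨hij.trans_lt (hju t ht).1, (hju t ht).2.trans huv⟩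
    simpa [← hcard] using this
  · obtain ⟨T, hTS, hT, -, hcard⟩ := exists_card_eq_antiLength x S i v
    exact_mod_cast hcard ▸ hS T hTS hT

lemma antiLength_lt {i : ℕ} (hi : i ∈ S) (hpos : 1 ≤ i) :
    antiLength x S i (x i - 1) < antiLength x S (i - 1) (x i) := by
  obtain ⟨T, hTS, hT, hiT, hcard⟩ := exists_card_eq_antiLength x S i (x i - 1)
  have hnotMem : i ∉ T := fun h => (hiT i h).1.false
  have hanti : StrictAntiOn x ((insert i T : Finset ℕ) : Set ℕ) := by
    rw [Finset.coe_insert]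
    rintro s (rfl | hs) t (rfl | ht) hst
    · exact absurd hst (lt_irrefl _)
    · have := (hiT t ht).2
      omega
    · exact absurd hst (hiT s hs).1.le.not_gt
    · exact hT hs ht hst
  have := card_le_antiLength (Finset.insert_subset hi hTS) hanti (i := i - 1) (v := x i)
    fun t ht => by
      rcases Finset.mem_insert.1 ht with rfl | ht
      · exact ⟨by omega, le_rfl⟩
      · have := hiT t ht
        omega
  rw [Finset.card_insert_of_notMem hnotMem] at this
  omega

lemma exists_card_le_jumps (hSN : S ⊆ Finset.Icc 1 N)
    (hS : ∀ T ⊆ S, StrictAntiOn x T → T.card ≤ k) :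
    ∃ h, IsHeightUpTo k h ∧ S.card ≤ jumps N x h := by
  refine ⟨_, isHeightUpTo_antiLength hS, ?_⟩
  calc S.card = ∑ i ∈ S, jumpAt x (fun i v => antiLength x S i v) i := by
        rw [Finset.card_eq_sum_ones]
        refine Finset.sum_congr rfl fun i hi => ?_
        have := antiLength_lt (x := x) hi (Finset.mem_Icc.1 (hSN hi)).1
        simp [jumpAt, jump, this]
    _ ≤ jumps N x _ := Finset.sum_le_sum_of_subset hSN

lemma card_le_greeneC_of_forall_strictAntiOn (hSN : S ⊆ Finset.Icc 1 N)
    (hS : ∀ T ⊆ S, StrictAntiOn x T → T.card ≤ k) : S.card ≤ greeneC N x k := by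
  obtain ⟨h, hh, hcard⟩ := exists_card_le_jumps hSN hS
  exact hcard.trans (hh.jumps_le_greeneC N x)

lemma IsIncreasingFamily.card_strictAntiOn_le (h : IsIncreasingFamily N x k S f)
    {T : Finset ℕ} (hTS : T ⊆ S) (hT : StrictAntiOn x T) : T.card ≤ k := by
  have hinj : Set.InjOn f T := by
    intro i hi j hj he
    rcases lt_trichotomy i j with hij | hij | hij
    · exact absurd (hT hi hj hij) (h.le i (hTS hi) j (hTS hj) hij he).not_gt
    · exact hij
    · exact absurd (hT hj hi hij) (h.le j (hTS hj) i (hTS hi) hij he.symm).not_gt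
  simpa using Finset.card_le_card_of_injOn f
    (fun i hi => Finset.mem_coe.2 (Finset.mem_range.2 (h.lt i (hTS hi)))) hinj

lemma exists_greeneC_le_jumps (N : ℕ) (x : ℕ → ℤ) (k : ℕ) :
    ∃ h, IsHeightUpTo k h ∧ greeneC N x k ≤ jumps N x h := by
  obtain ⟨S, f, hf, hS⟩ := exists_card_eq_greeneC N x k
  exact hS ▸ exists_card_le_jumps hf.subset fun _ => hf.card_strictAntiOn_le

end Heights

section SequenceDuality

variable {N : ℕ} {x : ℕ → ℤ}

theorem greeneC_add_greeneC_neg_le (hx : Set.InjOn x (Finset.Icc 1 N)) (k l : ℕ) :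
    greeneC N x k + greeneC N (-x) l ≤ N + k * l := by
  obtain ⟨S, f, hf, hS⟩ := exists_card_eq_greeneC N x k
  obtain ⟨A, g, hg, hA⟩ := exists_card_eq_greeneC N (-x) l
  have hunion : (S ∪ A).card ≤ N := by
    simpa using Finset.card_le_card (Finset.union_subset hf.subset hg.subset)
  have hlt : ∀ i ∈ S ∩ A, ∀ j ∈ S ∩ A, f i = f j → g i = g j → ¬ i < j := by
    intro i hi j hj hfij hgij hij
    rw [Finset.mem_inter] at hi hj
    have hle := hf.le i hi.1 j hj.1 hij hfij
    have hge := hg.le i hi.2 j hj.2 hij hgij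
    exact hij.ne (hx (hf.subset hi.1) (hf.subset hj.1) (hle.antisymm (neg_le_neg_iff.1 hge)))
  have hinter : (S ∩ A).card ≤ k * l := by
    have hmaps : ∀ i ∈ S ∩ A, (f i, g i) ∈ Finset.range k ×ˢ Finset.range l := fun i hi => by
      rw [Finset.mem_inter] at hi
      simpa using ⟨hf.lt i hi.1, hg.lt i hi.2⟩
    have hinj : Set.InjOn (fun i => (f i, g i)) (S ∩ A : Finset ℕ) := by
      intro i hi j hj he
      obtain ⟨hfij, hgij⟩ := Prod.mk.inj he
      exact le_antisymm (not_lt.1 (hlt j hj i hi hfij.symm hgij.symm))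
        (not_lt.1 (hlt i hi j hj hfij hgij))
    simpa using Finset.card_le_card_of_injOn _ hmaps hinj
  have := Finset.card_union_add_card_inter S A
  omega

instance isStrictOrder_lt_and_lt (N : ℕ) (x : ℕ → ℤ) :
    IsStrictOrder (Finset.Icc 1 N) fun i j => (i : ℕ) < j ∧ x i < x j where
  irrefl _ h := lt_irrefl _ h.1
  trans _ _ _ h h' := ⟨h.1.trans h'.1, h.2.trans h'.2⟩

theorem exists_le_greeneC_add_greeneC_neg (N : ℕ) (x : ℕ → ℤ) (k : ℕ) :
    ∃ l, N + k * l ≤ greeneC N x k + greeneC N (-x) l := by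
  rcases k.eq_zero_or_pos with rfl | hk
  · exact ⟨N, by simpa [greeneC_zero] using length_le_greeneC_self N (-x)⟩
  obtain ⟨l, S, A, f, hS, hfl, hf, hcard⟩ := exists_chain_antichain_families hk
    (P := Finset.Icc 1 N) (r := fun i j => (i : ℕ) < j ∧ x i < x j)
  have hsub : ∀ B : Finset (Finset.Icc 1 N),
      B.map (Function.Embedding.subtype _) ⊆ Finset.Icc 1 N := fun B i hi => by
    obtain ⟨p, -, rfl⟩ := Finset.mem_map.1 hi
    exact p.2
  have hSk : S.card ≤ greeneC N x k := by
    rw [← Finset.card_map (Function.Embedding.subtype _)]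
    refine card_le_greeneC_of_forall_strictAntiOn (hsub S) fun T hTS hT => ?_
    obtain ⟨T, hTS', rfl⟩ := Finset.subset_map_iff.1 hTS
    rw [Finset.card_map]
    refine hS T hTS' fun p hp q hq hpq => hpq.2.not_gt (hT ?_ ?_ hpq.1) <;> simpa
  have hAl : A.card ≤ greeneC N (-x) l := by
    have hfam : IsIncreasingFamily N (-x) l (A.map (Function.Embedding.subtype _))
        fun i => if hi : i ∈ Finset.Icc 1 N then f ⟨i, hi⟩ else 0 := by
      refine ⟨hsub A, ?_, ?_⟩ <;> simp only [Finset.forall_mem_map]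
      · intro p hp
        simpa using hfl p hp
      · intro p hp q hq hpq he
        simpa using not_and.1 (hf p hp q hq (by simpa using he)) hpq
    simpa using hfam.card_le_greeneC
  simp only [Fintype.card_coe, Nat.card_Icc, Nat.add_sub_cancel] at hcard
  exact ⟨l, by omega⟩

end SequenceDuality

section Parity

/-- The relation between the partial sums `c`, `a` of a partition of `N` and of its conjugate. -/
structure IsConjugate (N : ℕ) (c a : ℕ → ℕ) : Prop where
  add_le : ∀ k l, c k + a l ≤ N + k * l
  exists_left : ∀ k, ∃ l, N + k * l ≤ c k + a l
  exists_right : ∀ l, ∃ k, N + k * l ≤ c k + a l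

variable {N : ℕ} {c c' a a' : ℕ → ℕ}

lemma IsConjugate.monotone (h : IsConjugate N c a) : Monotone c := by
  refine monotone_nat_of_le_succ fun r => ?_
  obtain ⟨l, hl⟩ := h.exists_left (r + 1)
  have := h.add_le r l
  nlinarith

lemma IsConjugate.add_mul_le (h : IsConjugate N c a) {r m : ℕ} (hr : c r + m ≤ c (r + 1)) {k : ℕ}
    (hk : k ≤ r) : c k + (r + 1 - k) * m ≤ c (r + 1) := by
  obtain ⟨l, hl⟩ := h.exists_left r
  have hnext := h.add_le (r + 1) l
  have hprev := h.add_le k l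
  have hml : m ≤ l := by linarith
  obtain ⟨d, rfl⟩ := Nat.exists_eq_add_of_le hk
  have : d * m ≤ d * l := Nat.mul_le_mul_left d hml
  rw [show k + d + 1 - k = d + 1 by omega]
  linarith

lemma IsConjugate.le_add_mul (h : IsConjugate N c a) {r m : ℕ} (hr : c (r + 1) ≤ c r + m) {k : ℕ}
    (hk : r < k) : c k ≤ c r + (k - r) * m := by
  obtain ⟨l, hl⟩ := h.exists_left (r + 1)
  have hnext := h.add_le k l
  have hprev := h.add_le r l
  have hlm : l ≤ m := by linarith
  obtain ⟨d, rfl⟩ := Nat.exists_eq_add_of_le hk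
  have : d * l ≤ d * m := Nat.mul_le_mul_left d hlm
  rw [show r.succ + d - r = d + 1 by omega]
  linarith

/- Row `r + 1` has the box in column `j + 1`, hence column `j + 1` has the box in row `r + 1`. -/
lemma IsConjugate.add_le_succ (h : IsConjugate N c a) {r j : ℕ}
    (hr : c r + (j + 1) ≤ c (r + 1)) : a j + (r + 1) ≤ a (j + 1) := by
  obtain ⟨k, hk⟩ := h.exists_right (j + 1)
  rcases le_or_gt k r with hkr | hkr
  · have hc := h.add_mul_le hr hkr
    have := h.add_le (r + 1) j
    zify [hkr.trans r.le_succ] at hc this hk ⊢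
    linarith
  · have := h.add_le k j
    linarith

lemma IsConjugate.succ_le_add (h : IsConjugate N c a) {r j : ℕ}
    (hr : c (r + 1) ≤ c r + j) : a (j + 1) ≤ a j + r := by
  obtain ⟨k, hk⟩ := h.exists_right j
  rcases le_or_gt k r with hkr | hkr
  · have := h.add_le k (j + 1)
    linarith
  · have hc := h.le_add_mul hr hkr
    have := h.add_le r (j + 1)
    zify [hkr.le] at hc this hk ⊢
    linarith

/-- The sequences `c'` and `c` agree up to steps of `1`, and where they differ at an even index they
also differ at the two neighbouring indices. -/
structure IsParityStep (c' c : ℕ → ℕ) : Prop where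
  le : ∀ k, c' k ≤ c k
  le_succ : ∀ k, c k ≤ c' k + 1
  lt_of_even : ∀ k l, Even k → (l = k + 1 ∨ k = l + 1) → c' k < c k → c' l < c l

lemma rowEv_eq_of_eq_succ {p q : ℕ → ℕ} {i : ℕ} (h : p i = q i + 1) (hodd : ¬ Even (i + p i)) :
    rowEv p i = rowEv q i := by
  rw [h] at hodd
  rw [rowEv, rowEv, h, ← Finset.insert_Icc_right_eq_Icc_add_one (by omega), Finset.filter_insert,
    if_neg hodd]

/- The rows differ in at most one box. The parity of its row is determined by comparing the partial
sums of the rows, the parity of its column by comparing those of the columns. -/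
theorem rowEv_eq_of_isParityStep (hc : IsConjugate N c a) (hc' : IsConjugate N c' a')
    (hcc : IsParityStep c' c) (haa : IsParityStep a a') (r : ℕ) :
    rowEv (fun k => c k - c (k - 1)) (r + 1) = rowEv (fun k => c' k - c' (k - 1)) (r + 1) := by
  have hmono : c r ≤ c (r + 1) := hc.monotone r.le_succ
  have hmono' : c' r ≤ c' (r + 1) := hc'.monotone r.le_succ
  have hr := hcc.le r
  have hr' := hcc.le_succ r
  have hr1 := hcc.le (r + 1)
  have hr1' := hcc.le_succ (r + 1)
  set j := min (c (r + 1) - c r) (c' (r + 1) - c' r)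
  have hj0 := haa.le j
  have hj0' := haa.le_succ j
  have hj1 := haa.le (j + 1)
  have hj1' := haa.le_succ (j + 1)
  obtain heq | hlt | hgt : c (r + 1) - c r = c' (r + 1) - c' r ∨
      c (r + 1) - c r = (c' (r + 1) - c' r) + 1 ∨ c' (r + 1) - c' r = (c (r + 1) - c r) + 1 := by
    omega
  · simp only [rowEv, Nat.add_sub_cancel, heq]
  · have hlong : a j + (r + 1) ≤ a (j + 1) := hc.add_le_succ (by omega)
    have hshort : a' (j + 1) ≤ a' j + r := hc'.succ_le_add (by omega)
    have hrow : ¬ Even (r + 1) := fun he => by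
      have := hcc.lt_of_even (r + 1) r he (.inr rfl) (by omega)
      omega
    have hcol : ¬ Even j := fun he => by
      have := haa.lt_of_even j (j + 1) he (.inl rfl) (by omega)
      omega
    refine rowEv_eq_of_eq_succ (by simpa using hlt) ?_
    simp only [Nat.add_sub_cancel]
    grind
  · have hlong : a' j + (r + 1) ≤ a' (j + 1) := hc'.add_le_succ (by omega)
    have hshort : a (j + 1) ≤ a j + r := hc.succ_le_add (by omega)
    have hrow : ¬ Even r := fun he => by
      have := hcc.lt_of_even r (r + 1) he (.inl rfl) (by omega)
      omega
    have hcol : ¬ Even (j + 1) := fun he => by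
      have := haa.lt_of_even (j + 1) j he (.inr rfl) (by omega)
      omega
    refine (rowEv_eq_of_eq_succ (by simpa using hgt) ?_).symm
    simp only [Nat.add_sub_cancel]
    grind

end Parity

theorem isConjugate_greeneC {N : ℕ} {x : ℕ → ℤ} (hx : Set.InjOn x (Finset.Icc 1 N)) :
    IsConjugate N (greeneC N x) (greeneC N (-x)) where
  add_le := greeneC_add_greeneC_neg_le hx
  exists_left := exists_le_greeneC_add_greeneC_neg N x
  exists_right l := by
    obtain ⟨k, hk⟩ := exists_le_greeneC_add_greeneC_neg N (-x) l
    exact ⟨k, by rwa [neg_neg, add_comm (greeneC N (-x) l), mul_comm] at hk⟩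

section CentralSwap

variable {n k l : ℕ} {a : ℤ} {y : ℕ → ℤ} {f g h : ℕ → ℤ → ℤ}

/-- A sequence `(-y_n, …, -y_1, y_1, …, y_n)` with `y_1 = a > 0`; its two central entries are
`-a` and `a`. -/
structure IsCentred (n : ℕ) (a : ℤ) (y : ℕ → ℤ) : Prop where
  one_le : 1 ≤ n
  pos : 0 < a
  apply_left : y n = -a
  antisymm : ∀ i ∈ Finset.Icc 1 (2 * n), y (2 * n + 1 - i) = -y i

/-- Exchanges the two central entries of a sequence of length `2 * n`. -/
def centralSwap (n : ℕ) (y : ℕ → ℤ) : ℕ → ℤ := y ∘ Equiv.swap n (n + 1)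

lemma IsCentred.apply_right (hy : IsCentred n a y) : y (n + 1) = a := by
  have := hy.antisymm n (Finset.mem_Icc.2 ⟨hy.one_le, by omega⟩)
  rwa [hy.apply_left, neg_neg, show 2 * n + 1 - n = n + 1 by omega] at this

lemma IsCentred.centralSwap_left (hy : IsCentred n a y) : centralSwap n y n = a := by
  simp [centralSwap, hy.apply_right]

lemma IsCentred.centralSwap_right (hy : IsCentred n a y) : centralSwap n y (n + 1) = -a := by
  simp [centralSwap, hy.apply_left]

lemma centralSwap_neg_centralSwap (n : ℕ) (y : ℕ → ℤ) :
    centralSwap n (-centralSwap n y) = -y := by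
  funext i
  simp [centralSwap]

lemma IsCentred.neg_centralSwap (hy : IsCentred n a y) : IsCentred n a (-centralSwap n y) where
  one_le := hy.one_le
  pos := hy.pos
  apply_left := by simp [hy.centralSwap_left]
  antisymm i hi := by
    rw [Finset.mem_Icc] at hi
    rcases eq_or_ne i n with rfl | hn
    · simp [show 2 * i + 1 - i = i + 1 by omega, hy.centralSwap_left, hy.centralSwap_right]
    rcases eq_or_ne i (n + 1) with rfl | hn'
    · simp [show 2 * n + 1 - (n + 1) = n by omega, hy.centralSwap_left, hy.centralSwap_right]
    · have := hy.antisymm i (Finset.mem_Icc.2 hi)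
      simp [centralSwap, Equiv.swap_apply_of_ne_of_ne hn hn',
        Equiv.swap_apply_of_ne_of_ne (show 2 * n + 1 - i ≠ n by omega)
          (show 2 * n + 1 - i ≠ n + 1 by omega), this]

/-- The positions of a sequence of length `2 * n` other than the two central ones. -/
def outer (n : ℕ) : Finset ℕ := Finset.Icc 1 (2 * n) \ {n, n + 1}

/-- The part of `jumps (2 * n) y h` that does not involve the central column `h n`. -/
def outerJumps (n : ℕ) (y : ℕ → ℤ) (h : ℕ → ℤ → ℤ) : ℕ := ∑ i ∈ outer n, jumpAt y h i

lemma mem_outer {i : ℕ} : i ∈ outer n ↔ (1 ≤ i ∧ i ≤ 2 * n) ∧ i ≠ n ∧ i ≠ n + 1 := by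
  simp [outer]

lemma jumps_eq_outerJumps_add (hn : 1 ≤ n) (y : ℕ → ℤ) (h : ℕ → ℤ → ℤ) :
    jumps (2 * n) y h = outerJumps n y h + jumpAt y h n + jumpAt y h (n + 1) := by
  have hsub : {n, n + 1} ⊆ Finset.Icc 1 (2 * n) := by
    intro i hi
    simp only [Finset.mem_insert, Finset.mem_singleton] at hi
    rw [Finset.mem_Icc]
    omega
  rw [jumps, ← Finset.sum_sdiff hsub, Finset.sum_pair n.lt_succ_self.ne, ← add_assoc]
  rfl

lemma outerJumps_centralSwap (n : ℕ) (y : ℕ → ℤ) (h : ℕ → ℤ → ℤ) :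
    outerJumps n (centralSwap n y) h = outerJumps n y h := by
  refine Finset.sum_congr rfl fun i hi => ?_
  obtain ⟨-, hn, hn'⟩ := mem_outer.1 hi
  simp [jumpAt, centralSwap, Equiv.swap_apply_of_ne_of_ne hn hn']

lemma jumps_update (hn : 1 ≤ n) (y : ℕ → ℤ) (h : ℕ → ℤ → ℤ) (col : ℤ → ℤ) :
    jumps (2 * n) y (Function.update h n col) = outerJumps n y h +
      jump (col (y n - 1)) (h (n - 1) (y n)) +
      jump (h (n + 1) (y (n + 1) - 1)) (col (y (n + 1))) := by
  have houter : outerJumps n y (Function.update h n col) = outerJumps n y h :=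
    Finset.sum_congr rfl fun i hi => by
      obtain ⟨hi, hn, hn'⟩ := mem_outer.1 hi
      simp [jumpAt, Function.update_of_ne hn, Function.update_of_ne (show i - 1 ≠ n by omega)]
  rw [jumps_eq_outerJumps_add hn, houter]
  simp [jumpAt, Function.update_of_ne (show n - 1 ≠ n by omega)]

lemma IsHeightUpTo.update (hh : IsHeightUpTo k h) {col : ℤ → ℤ} (hcol : Monotone col)
    (hlow : ∀ v, h (n + 1) v ≤ col v) (hhigh : ∀ v, col v ≤ h (n - 1) v) :
    IsHeightUpTo k (Function.update h n col) := by
  refine ⟨fun i j u v hij huv => ?_, fun i v => ?_, fun i v => ?_⟩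
  · rcases eq_or_ne i n with hi | hi <;> rcases eq_or_ne j n with hj | hj
    · simpa [hi, hj] using hcol huv
    · rw [hi, Function.update_of_ne hj, Function.update_self]
      exact (hh.isHeight (by omega) huv).trans (hlow v)
    · rw [hj, Function.update_of_ne hi, Function.update_self]
      exact (hhigh u).trans (hh.isHeight (by omega) huv)
    · rw [Function.update_of_ne hi, Function.update_of_ne hj]
      exact hh.isHeight hij huv
  · rcases eq_or_ne i n with rfl | hi
    · simpa using (hh.nonneg _ v).trans (hlow v)
    · simpa [Function.update_of_ne hi] using hh.nonneg i v
  · rcases eq_or_ne i n with rfl | hi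
    · simpa using (hhigh v).trans (hh.le _ v)
    · simpa [Function.update_of_ne hi] using hh.le i v

/-- The number of jumps of `h` when the central entries `-a` and `a` are both placed between the
columns `n - 1` and `n + 1`. It is at least the number of jumps of either of the sequences with
central entries `(-a, a)` and `(a, -a)`, and it does not depend on the column `h n`. -/
def relaxedJumps (n : ℕ) (a : ℤ) (y : ℕ → ℤ) (h : ℕ → ℤ → ℤ) : ℕ :=
  outerJumps n y h + jump (h (n + 1) (a - 1)) (h (n - 1) a) +
    jump (h (n + 1) (-a - 1)) (h (n - 1) (-a))

lemma jump_mono {b b' c c' : ℤ} (hb : b' ≤ b) (hc : c ≤ c') : jump b c ≤ jump b' c' := by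
  grind [jump]

lemma IsCentred.jumps_le_relaxedJumps (hy : IsCentred n a y) (hh : IsHeight h) :
    jumps (2 * n) y h ≤ relaxedJumps n a y h := by
  have hleft : jumpAt y h n ≤ jump (h (n + 1) (-a - 1)) (h (n - 1) (-a)) := by
    rw [jumpAt, hy.apply_left]
    exact jump_mono (hh n.le_succ le_rfl) le_rfl
  have hright : jumpAt y h (n + 1) ≤ jump (h (n + 1) (a - 1)) (h (n - 1) a) := by
    rw [jumpAt, hy.apply_right]
    exact jump_mono le_rfl (hh (by omega) le_rfl)
  rw [jumps_eq_outerJumps_add hy.one_le, relaxedJumps]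
  omega

lemma IsCentred.jumps_centralSwap_le_relaxedJumps (hy : IsCentred n a y) (hh : IsHeight h) :
    jumps (2 * n) (centralSwap n y) h ≤ relaxedJumps n a y h := by
  have hleft : jumpAt (centralSwap n y) h n ≤ jump (h (n + 1) (a - 1)) (h (n - 1) a) := by
    rw [jumpAt, hy.centralSwap_left]
    exact jump_mono (hh n.le_succ le_rfl) le_rfl
  have hright : jumpAt (centralSwap n y) h (n + 1) ≤
      jump (h (n + 1) (-a - 1)) (h (n - 1) (-a)) := by
    rw [jumpAt, hy.centralSwap_right]
    exact jump_mono le_rfl (hh (by omega) le_rfl)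
  rw [jumps_eq_outerJumps_add hy.one_le, outerJumps_centralSwap, relaxedJumps]
  omega

/- In the central column follow `h (n + 1)` on negative values and `h (n - 1)` on the others. -/
lemma IsCentred.relaxedJumps_le_greeneC (hy : IsCentred n a y) (hh : IsHeightUpTo k h) :
    relaxedJumps n a y h ≤ greeneC (2 * n) y k := by
  have ha := hy.pos
  have hupd := hh.update (n := n) (col := fun v => if 0 ≤ v then h (n - 1) v else h (n + 1) v)
    (fun u v huv => by
      have hhigh := hh.isHeight (le_refl (n - 1)) huv
      have hlow := hh.isHeight (le_refl (n + 1)) huv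
      have hacross := hh.isHeight (show n - 1 ≤ n + 1 by omega) huv
      grind)
    (fun v => by
      have := hh.isHeight (show n - 1 ≤ n + 1 by omega) (le_refl v)
      grind)
    (fun v => by
      have := hh.isHeight (show n - 1 ≤ n + 1 by omega) (le_refl v)
      grind)
  have hle := hupd.jumps_le_greeneC (2 * n) y
  rw [jumps_update hy.one_le, hy.apply_left, hy.apply_right, if_neg (by omega),
    if_pos ha.le] at hle
  rw [relaxedJumps]
  omega

/- In the central column follow the constant `m`, clamped between `h (n + 1)` and `h (n - 1)`. -/
lemma IsCentred.outerJumps_add_le_greeneC_centralSwap (hy : IsCentred n a y)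
    (hh : IsHeightUpTo k h) (m : ℤ) :
    outerJumps n y h + jump (max (h (n + 1) (a - 1)) m) (h (n - 1) a) +
      jump (h (n + 1) (-a - 1)) (min m (h (n - 1) (-a))) ≤ greeneC (2 * n) (centralSwap n y) k := by
  have hupd := hh.update (n := n) (col := fun v => max (h (n + 1) v) (min m (h (n - 1) v)))
    (fun u v huv =>
      max_le_max (hh.isHeight le_rfl huv) (min_le_min_left m (hh.isHeight le_rfl huv)))
    (fun v => le_max_left _ _)
    (fun v => max_le (hh.isHeight (by omega) le_rfl) (min_le_right _ _))
  refine le_trans ?_ (hupd.jumps_le_greeneC (2 * n) (centralSwap n y))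
  rw [jumps_update hy.one_le, outerJumps_centralSwap, hy.centralSwap_left, hy.centralSwap_right]
  gcongr
  · exact jump_mono (max_le_max le_rfl (min_le_left _ _)) le_rfl
  · exact jump_mono le_rfl (le_max_right _ _)

/-- The local configuration of `h` around the two central entries in which they contribute two jumps
for the order `(-a, a)` but only one for the order `(a, -a)`. -/
structure IsCentralStep (n : ℕ) (a r : ℤ) (h : ℕ → ℤ → ℤ) : Prop where
  left_pos : h (n - 1) a = r
  left_neg : h (n - 1) (-a) = r
  right_pos : h (n + 1) (a - 1) = r - 1
  right_neg : h (n + 1) (-a - 1) = r - 1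

lemma IsCentralStep.jumps_centralSwap_lt {r : ℤ} (hstep : IsCentralStep n a r h)
    (hy : IsCentred n a y) (hh : IsHeight h) :
    jumps (2 * n) (centralSwap n y) h < relaxedJumps n a y h := by
  have hcol : h n (-a) ≤ h n (a - 1) := hh le_rfl (by have := hy.pos; omega)
  rw [jumps_eq_outerJumps_add hy.one_le, outerJumps_centralSwap, relaxedJumps, jumpAt, jumpAt,
    hy.centralSwap_left, hy.centralSwap_right, Nat.add_sub_cancel, hstep.left_pos, hstep.left_neg,
    hstep.right_pos, hstep.right_neg]
  grind [jump]

lemma IsCentred.relaxedJumps_le_centralSwap (hy : IsCentred n a y) (hh : IsHeightUpTo k h) :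
    relaxedJumps n a y h ≤ greeneC (2 * n) (centralSwap n y) k + 1 ∧
      ((¬ ∃ r, IsCentralStep n a r h) →
        relaxedJumps n a y h ≤ greeneC (2 * n) (centralSwap n y) k) := by
  have ha := hy.pos
  have hleft : h (n - 1) (-a) ≤ h (n - 1) a := hh.isHeight le_rfl (by omega)
  have hright : h (n + 1) (-a - 1) ≤ h (n + 1) (a - 1) := hh.isHeight le_rfl (by omega)
  have hclamp := hy.outerJumps_add_le_greeneC_centralSwap hh
    (if h (n + 1) (-a - 1) < h (n - 1) (-a) then h (n + 1) (-a - 1) + 1 else h (n + 1) (a - 1))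
  rw [relaxedJumps]
  refine ⟨by grind [jump], fun hstep => ?_⟩
  have hvalues : ¬ (h (n - 1) (-a) = h (n - 1) a ∧ h (n + 1) (a - 1) = h (n - 1) a - 1 ∧
      h (n + 1) (-a - 1) = h (n - 1) a - 1) := fun ⟨h₁, h₂, h₃⟩ => hstep ⟨_, rfl, h₁, h₂, h₃⟩
  grind [jump]

end CentralSwap

section Exchange

variable {n k l : ℕ} {a : ℤ} {y : ℕ → ℤ} {f g h : ℕ → ℤ → ℤ}

lemma jump_add_jump_le {b b' c c' : ℤ} (h : b ≤ c) (h' : b' ≤ c') :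
    jump b c + jump b' c' ≤ jump (min b b') (min c c') + jump (max b b') (max c c') := by
  grind [jump]

lemma IsHeight.inf (hf : IsHeight f) (hg : IsHeight g) : IsHeight fun i v => min (f i v) (g i v) :=
  fun _ _ _ _ hij huv => min_le_min (hf hij huv) (hg hij huv)

lemma IsHeight.sup (hf : IsHeight f) (hg : IsHeight g) : IsHeight fun i v => max (f i v) (g i v) :=
  fun _ _ _ _ hij huv => max_le_max (hf hij huv) (hg hij huv)

lemma IsHeight.add_const (hh : IsHeight h) (s : ℤ) : IsHeight fun i v => h i v + s :=
  fun _ _ _ _ hij huv => by simpa using hh hij huv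

lemma relaxedJumps_add_const (n : ℕ) (a : ℤ) (y : ℕ → ℤ) (h : ℕ → ℤ → ℤ) (s : ℤ) :
    relaxedJumps n a y (fun i v => h i v + s) = relaxedJumps n a y h := by
  simp [relaxedJumps, outerJumps, jumpAt, jump]

lemma IsHeight.relaxedJumps_add_le (hf : IsHeight f) (hg : IsHeight g) (n : ℕ) (a : ℤ)
    (y : ℕ → ℤ) :
    relaxedJumps n a y f + relaxedJumps n a y g ≤
      relaxedJumps n a y (fun i v => min (f i v) (g i v)) +
        relaxedJumps n a y (fun i v => max (f i v) (g i v)) := by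
  have houter : outerJumps n y f + outerJumps n y g ≤
      outerJumps n y (fun i v => min (f i v) (g i v)) +
        outerJumps n y (fun i v => max (f i v) (g i v)) := by
    simp only [outerJumps, ← Finset.sum_add_distrib]
    exact Finset.sum_le_sum fun i _ => jump_add_jump_le (hf (by omega) (by omega))
      (hg (by omega) (by omega))
  have hpos := jump_add_jump_le (hf (show n - 1 ≤ n + 1 by omega) (show a - 1 ≤ a by omega))
    (hg (show n - 1 ≤ n + 1 by omega) (show a - 1 ≤ a by omega))
  have hneg := jump_add_jump_le (hf (show n - 1 ≤ n + 1 by omega) (show -a - 1 ≤ -a by omega))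
    (hg (show n - 1 ≤ n + 1 by omega) (show -a - 1 ≤ -a by omega))
  simp only [relaxedJumps]
  omega

/-- The image of a height function under the central symmetry `(i, v) ↦ (2 * n + 1 - i, -v)` of the
graph of a sequence, written for the half-integral points at which height functions live. -/
def centralReflect (n k : ℕ) (h : ℕ → ℤ → ℤ) : ℕ → ℤ → ℤ := fun i v => k - h (2 * n - i) (-v - 1)

lemma IsHeightUpTo.reflect (hh : IsHeightUpTo k h) (n : ℕ) :
    IsHeightUpTo k (centralReflect n k h) where
  isHeight i j u v hij huv := by
    exact sub_le_sub_left (hh.isHeight (by omega) (by omega)) _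
  nonneg i v := by simpa [centralReflect] using hh.le _ _
  le i v := by simpa [centralReflect] using hh.nonneg _ _

lemma jump_sub_sub (b c d : ℤ) : jump (d - b) (d - c) = jump c b := by
  simp [jump]

lemma IsCentred.outerJumps_centralReflect (hy : IsCentred n a y) (k : ℕ) (h : ℕ → ℤ → ℤ) :
    outerJumps n y (centralReflect n k h) = outerJumps n y h := by
  refine Finset.sum_nbij' (2 * n + 1 - ·) (2 * n + 1 - ·) ?_ ?_ ?_ ?_ fun i hi => ?_
  iterate 4
    intro i hi
    rw [mem_outer] at *
    omega
  have hi := (mem_outer.1 hi).1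
  rw [jumpAt, centralReflect, centralReflect, jump_sub_sub, jumpAt,
    hy.antisymm i (Finset.mem_Icc.2 hi)]
  congr 2 <;> omega

lemma IsCentred.relaxedJumps_centralReflect (hy : IsCentred n a y) (k : ℕ) (h : ℕ → ℤ → ℤ) :
    relaxedJumps n a y (centralReflect n k h) = relaxedJumps n a y h := by
  have hn := hy.one_le
  simp only [relaxedJumps, hy.outerJumps_centralReflect, centralReflect, jump_sub_sub,
    show 2 * n - (n - 1) = n + 1 by omega, show 2 * n - (n + 1) = n - 1 by omega, neg_sub,
    sub_neg_eq_add, neg_neg, add_sub_cancel_left, show 1 - a - 1 = -a by ring,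
    add_right_comm]

lemma IsCentralStep.reflect {r : ℤ} (hh : IsCentralStep n a r h) (hn : 1 ≤ n) (k : ℕ) :
    IsCentralStep n a (k + 1 - r) (centralReflect n k h) := by
  obtain ⟨h₁, h₂, h₃, h₄⟩ := hh
  have hleft : 2 * n - (n - 1) = n + 1 := by omega
  have hright : 2 * n - (n + 1) = n - 1 := by omega
  constructor <;> rw [centralReflect]
  · rw [hleft, h₄]; ring
  · rw [hleft, neg_neg, h₃]; ring
  · rw [hright, show -(a - 1) - 1 = -a by ring, h₂]; ring
  · rw [hright, show -(-a - 1) - 1 = a by ring, h₁]; ring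

/-- A height function with values in `0, …, k` realizing the Greene invariant `c_k`. -/
structure IsOptimal (n : ℕ) (a : ℤ) (y : ℕ → ℤ) (k : ℕ) (h : ℕ → ℤ → ℤ) : Prop
    extends IsHeightUpTo k h where
  le_relaxedJumps : greeneC (2 * n) y k ≤ relaxedJumps n a y h

lemma IsCentred.exists_isOptimal (hy : IsCentred n a y) (k : ℕ) : ∃ h, IsOptimal n a y k h := by
  obtain ⟨h, hh, hle⟩ := exists_greeneC_le_jumps (2 * n) y k
  exact ⟨h, hh, hle.trans (hy.jumps_le_relaxedJumps hh.isHeight)⟩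

lemma IsOptimal.reflect (hh : IsOptimal n a y k h) (hy : IsCentred n a y) :
    IsOptimal n a y k (centralReflect n k h) :=
  ⟨hh.toIsHeightUpTo.reflect n, by rw [hy.relaxedJumps_centralReflect]; exact hh.le_relaxedJumps⟩

lemma IsOptimal.exchange (hf : IsOptimal n a y k f) (hg : IsOptimal n a y l g)
    (hy : IsCentred n a y) {s : ℤ} (hs : 0 ≤ s) (hlk : l ≤ k + s) :
    IsOptimal n a y k (fun i v => max (f i v) (g i v - s)) ∧
      IsOptimal n a y l (fun i v => min (f i v + s) (g i v)) := by
  have hmax : IsHeightUpTo k fun i v => max (f i v) (g i v - s) :=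
    ⟨hf.isHeight.sup (hg.isHeight.add_const (-s)), fun i v => le_max_of_le_left (hf.nonneg i v),
      fun i v => max_le (hf.le i v) (by have := hg.le i v; omega)⟩
  have hmin : IsHeightUpTo l fun i v => min (f i v + s) (g i v) :=
    ⟨(hf.isHeight.add_const s).inf hg.isHeight,
      fun i v => le_min (add_nonneg (hf.nonneg i v) hs) (hg.nonneg i v),
      fun i v => min_le_of_right_le (hg.le i v)⟩
  have hshift : relaxedJumps n a y (fun i v => min (f i v) (g i v - s)) =
      relaxedJumps n a y (fun i v => min (f i v + s) (g i v)) := by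
    rw [← relaxedJumps_add_const n a y _ s]
    simp only [← min_add_add_right, sub_add_cancel]
  have hshift' : relaxedJumps n a y (fun i v => g i v - s) = relaxedJumps n a y g :=
    relaxedJumps_add_const n a y g (-s)
  have hsuper := hf.isHeight.relaxedJumps_add_le (hg.isHeight.add_const (-s)) n a y
  simp only [← sub_eq_add_neg, hshift, hshift'] at hsuper
  have hk := hy.relaxedJumps_le_greeneC hmax
  have hl := hy.relaxedJumps_le_greeneC hmin
  have := hf.le_relaxedJumps
  have := hg.le_relaxedJumps
  exact ⟨⟨hmax, by omega⟩, ⟨hmin, by omega⟩⟩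

lemma IsCentred.greeneC_centralSwap_le (hy : IsCentred n a y) (k : ℕ) :
    greeneC (2 * n) (centralSwap n y) k ≤ greeneC (2 * n) y k := by
  obtain ⟨h, hh, hle⟩ := exists_greeneC_le_jumps (2 * n) (centralSwap n y) k
  exact hle.trans <| (hy.jumps_centralSwap_le_relaxedJumps hh.isHeight).trans <|
    hy.relaxedJumps_le_greeneC hh

lemma IsCentred.greeneC_le_centralSwap_add_one (hy : IsCentred n a y) (k : ℕ) :
    greeneC (2 * n) y k ≤ greeneC (2 * n) (centralSwap n y) k + 1 := by
  obtain ⟨h, hh⟩ := hy.exists_isOptimal k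
  exact hh.le_relaxedJumps.trans (hy.relaxedJumps_le_centralSwap hh.toIsHeightUpTo).1

lemma IsOptimal.exists_isCentralStep (hh : IsOptimal n a y k h) (hy : IsCentred n a y)
    (hlt : greeneC (2 * n) (centralSwap n y) k < greeneC (2 * n) y k) :
    ∃ r, IsCentralStep n a r h := by
  by_contra hstep
  have := (hy.relaxedJumps_le_centralSwap hh.toIsHeightUpTo).2 hstep
  have := hh.le_relaxedJumps
  omega

lemma IsCentred.exists_isOptimal_not_isCentralStep (hy : IsCentred n a y)
    (hle : greeneC (2 * n) y k ≤ greeneC (2 * n) (centralSwap n y) k) :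
    ∃ h, IsOptimal n a y k h ∧ ¬ ∃ r, IsCentralStep n a r h := by
  obtain ⟨h, hh, hjumps⟩ := exists_greeneC_le_jumps (2 * n) (centralSwap n y) k
  have hrelaxed := hy.jumps_centralSwap_le_relaxedJumps hh.isHeight
  refine ⟨h, ⟨hh, by omega⟩, fun ⟨r, hr⟩ => ?_⟩
  have := hr.jumps_centralSwap_lt hy hh.isHeight
  have := hy.relaxedJumps_le_greeneC hh
  omega

/- Both exchanges of `f` with `g` are optimal for `k`, hence have central steps; this pins `g` to
within one of the central step of `f`. -/
lemma IsOptimal.mem_Icc_of_not_isCentralStep (hf : IsOptimal n a y k f) (hg : IsOptimal n a y l g)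
    (hy : IsCentred n a y) (hlt : greeneC (2 * n) (centralSwap n y) k < greeneC (2 * n) y k)
    (hgstep : ¬ ∃ r, IsCentralStep n a r g) {r s t : ℤ} (hr : IsCentralStep n a r f)
    (hs : 0 ≤ s) (ht : 0 ≤ t) (hst : s + t = 1) (hlk : (l : ℤ) = k + s - t) :
    g (n - 1) a ∈ Set.Icc (r - t) (r + s) ∧ g (n - 1) (-a) ∈ Set.Icc (r - t) (r + s) ∧
      g (n + 1) (a - 1) ∈ Set.Icc (r - 1 - t) (r - 1 + s) ∧
      g (n + 1) (-a - 1) ∈ Set.Icc (r - 1 - t) (r - 1 + s) := by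
  obtain ⟨h₁, h₂, h₃, h₄⟩ := hr
  obtain ⟨p, hp₁, hp₂, hp₃, hp₄⟩ :=
    (hf.exchange hg hy hs (by omega)).1.exists_isCentralStep hy hlt
  obtain ⟨q, hq₁, hq₂, hq₃, hq₄⟩ :=
    (hg.exchange hf hy ht (by omega)).2.exists_isCentralStep hy hlt
  have hg' : ¬ (g (n - 1) (-a) = g (n - 1) a ∧ g (n + 1) (a - 1) = g (n - 1) a - 1 ∧
      g (n + 1) (-a - 1) = g (n - 1) a - 1) := fun ⟨h₁, h₂, h₃⟩ => hgstep ⟨_, rfl, h₁, h₂, h₃⟩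
  simp only [h₁, h₂, h₃, h₄, Set.mem_Icc] at *
  omega

/- The central steps `r` of an optimal `f` and `k + 1 - r` of its reflection are distinct when `k`
is even, and a function within one of both is determined. -/
lemma IsCentred.isParityStep (hy : IsCentred n a y) :
    IsParityStep (greeneC (2 * n) (centralSwap n y)) (greeneC (2 * n) y) where
  le := hy.greeneC_centralSwap_le
  le_succ := hy.greeneC_le_centralSwap_add_one
  lt_of_even k l hk hkl hlt := by
    by_contra! hle
    obtain ⟨f, hf⟩ := hy.exists_isOptimal k
    obtain ⟨r, hr⟩ := hf.exists_isCentralStep hy hlt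
    obtain ⟨g, hg, hgstep⟩ := hy.exists_isOptimal_not_isCentralStep hle
    obtain ⟨s, t, hs, ht, hst, hlk⟩ :
        ∃ s t : ℤ, 0 ≤ s ∧ 0 ≤ t ∧ s + t = 1 ∧ (l : ℤ) = k + s - t := by
      rcases hkl with rfl | rfl
      · exact ⟨1, 0, by simp⟩
      · exact ⟨0, 1, by simp⟩
    obtain ⟨hA, hG, hB, hD⟩ :=
      hf.mem_Icc_of_not_isCentralStep hg hy hlt hgstep hr hs ht hst hlk
    obtain ⟨hA', hG', hB', hD'⟩ := (hf.reflect hy).mem_Icc_of_not_isCentralStep hg hy hlt hgstep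
      (hr.reflect hy.one_le k) hs ht hst hlk
    simp only [Set.mem_Icc] at *
    obtain ⟨m, rfl⟩ := hk
    refine hgstep ⟨_, rfl, ?_, ?_, ?_⟩ <;> omega

end Exchange

section SignedPermutations

variable {n i j : ℕ} {v : ℤ} {w : Equiv.Perm ℤ}

lemma IsCentred.rowEv_rsShape_centralSwap {a : ℤ} {y : ℕ → ℤ} (hy : IsCentred n a y)
    (hinj : Set.InjOn y (Finset.Icc 1 (2 * n))) {i : ℕ} (hi : 1 ≤ i) :
    rowEv (rsShape (2 * n) y) i = rowEv (rsShape (2 * n) (centralSwap n y)) i := by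
  have hmaps : Set.MapsTo (Equiv.swap n (n + 1)) (Finset.Icc 1 (2 * n) : Set ℕ)
      (Finset.Icc 1 (2 * n)) := by
    intro i hi
    have := hy.one_le
    rw [Finset.mem_coe, Finset.mem_Icc] at *
    rw [Equiv.swap_apply_def]
    split_ifs <;> omega
  have hparity := hy.neg_centralSwap.isParityStep
  rw [centralSwap_neg_centralSwap] at hparity
  obtain ⟨r, rfl⟩ := Nat.exists_eq_succ_of_ne_zero (by omega : i ≠ 0)
  exact rowEv_eq_of_isParityStep (isConjugate_greeneC hinj)
    (isConjugate_greeneC (hinj.comp (Equiv.injective _).injOn hmaps)) hy.isParityStep hparity r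

/-- The set `{±1, …, ±n}`. -/
def signedLabels (n : ℕ) : Set ℤ := {v | 1 ≤ |v| ∧ |v| ≤ n}

instance : Finite (signedLabels n) :=
  (Set.finite_Icc (-n : ℤ) n).subset fun _ hv => abs_le.1 hv.2

/-- The `i`-th element of `-n < ⋯ < -1 < 1 < ⋯ < n`, counted from `1`. -/
def signedLabel (n i : ℕ) : ℤ := if i ≤ n then (i : ℤ) - n - 1 else (i : ℤ) - n

/-- The inverse of `signedLabel n` on `signedLabels n`. -/
def labelPosition (n : ℕ) (v : ℤ) : ℕ := if v < 0 then (v + n + 1).toNat else (v + n).toNat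

lemma strictMono_signedLabel (n : ℕ) : StrictMono (signedLabel n) := by
  intro i j hij
  grind [signedLabel]

lemma signedLabel_mem (hi : i ∈ Finset.Icc 1 (2 * n)) : signedLabel n i ∈ signedLabels n := by
  rw [Finset.mem_Icc] at hi
  rw [signedLabels, Set.mem_ofPred_eq, signedLabel]
  grind

lemma labelPosition_mem (hv : v ∈ signedLabels n) : labelPosition n v ∈ Finset.Icc 1 (2 * n) := by
  obtain ⟨h₁, h₂⟩ := hv
  rw [Finset.mem_Icc, labelPosition]
  grind

lemma signedLabel_labelPosition (hv : v ∈ signedLabels n) :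
    signedLabel n (labelPosition n v) = v := by
  obtain ⟨h₁, h₂⟩ := hv
  grind [signedLabel, labelPosition]

lemma isSignedPerm_iff :
    IsSignedPerm n w ↔
      (∀ v, w (-v) = -w v) ∧ Set.MapsTo w (signedLabels n) (signedLabels n) := by
  refine and_congr_right fun hodd => ⟨fun hw v ⟨h₁, h₂⟩ => ?_, fun hw v h₁ h₂ => hw ?_⟩
  · rcases le_total 0 v with hv | hv
    · rw [abs_of_nonneg hv] at h₁ h₂
      exact hw v h₁ h₂
    · rw [abs_of_nonpos hv] at h₁ h₂
      simpa [signedLabels, hodd] using hw (-v) h₁ h₂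
  · rw [signedLabels, Set.mem_ofPred_eq, abs_of_pos (by omega)]
    exact ⟨h₁, h₂⟩

lemma _root_.IsSignedPerm.mul {w' : Equiv.Perm ℤ} (hw : IsSignedPerm n w)
    (hw' : IsSignedPerm n w') : IsSignedPerm n (w * w') := by
  rw [isSignedPerm_iff] at *
  exact ⟨fun v => by simp [hw.1, hw'.1], hw.2.comp hw'.2⟩

lemma _root_.IsSignedPerm.inv (hw : IsSignedPerm n w) : IsSignedPerm n w⁻¹ := by
  rw [isSignedPerm_iff] at *
  exact ⟨fun v => by
      rw [Equiv.Perm.inv_eq_iff_eq, hw.1, Equiv.Perm.coe_inv, Equiv.apply_symm_apply],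
    Equiv.Perm.perm_symm_mapsTo_of_mapsTo w hw.2⟩

/-- The generator `t` of `W_n` exchanging `1` and `-1`. -/
def signChange : Equiv.Perm ℤ := Equiv.swap 1 (-1)

lemma signChange_apply (v : ℤ) : signChange v = if |v| = 1 then -v else v := by
  rw [signChange, Equiv.swap_apply_def]
  grind

lemma isSignedPerm_signChange (n : ℕ) : IsSignedPerm n signChange := by
  refine ⟨fun v => ?_, fun v h₁ h₂ => ?_⟩ <;> simp only [signChange_apply] <;> grind

/-- The sequence `(w(-n), …, w(-1), w(1), …, w(n))`. -/
def signedSeq (n : ℕ) (w : Equiv.Perm ℤ) : ℕ → ℤ := fun i => w (signedLabel n i)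

lemma _root_.IsSignedPerm.preMinus_eq (hw : IsSignedPerm n w) :
    preMinus n (fun k => w (k : ℤ)) = signedSeq n w := by
  funext i
  by_cases hi : i ≤ n
  · rw [preMinus, if_pos hi, signedSeq, signedLabel, if_pos hi, ← hw.1]
    congr 1
    omega
  · rw [preMinus, if_neg hi, signedSeq, signedLabel, if_neg hi, Nat.cast_sub (by omega)]

lemma signedSeq_mul_signChange (n : ℕ) (w : Equiv.Perm ℤ) :
    signedSeq n (w * signChange) = centralSwap n (signedSeq n w) := by
  funext i
  rw [signedSeq, centralSwap, Equiv.Perm.mul_apply, Function.comp_apply, signedSeq]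
  congr 1
  rw [signChange_apply, Equiv.swap_apply_def]
  grind [signedLabel]

lemma _root_.IsSignedPerm.isCentred_signedSeq (hw : IsSignedPerm n w) (hn : 1 ≤ n)
    (hpos : 0 < w 1) : IsCentred n (w 1) (signedSeq n w) where
  one_le := hn
  pos := hpos
  apply_left := by simp [signedSeq, signedLabel, hw.1]
  antisymm i hi := by
    rw [Finset.mem_Icc] at hi
    rw [signedSeq, signedSeq, ← hw.1]
    congr 1
    grind [signedLabel]

lemma _root_.IsSignedPerm.rowEv_rsShape_mul_signChange (hw : IsSignedPerm n w) (hi : 1 ≤ i) :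
    rowEv (rsShape (2 * n) (signedSeq n w)) i =
      rowEv (rsShape (2 * n) (signedSeq n (w * signChange))) i := by
  rcases n.eq_zero_or_pos with rfl | hn
  · have hzero (x : ℕ → ℤ) (k : ℕ) : greeneC 0 x k = 0 := Nat.le_zero.1 (greeneC_le_length 0 x k)
    simp [rowEv, rsShape, hzero]
  have hswap {w : Equiv.Perm ℤ} (hw : IsSignedPerm n w) (hpos : 0 < w 1) :
      rowEv (rsShape (2 * n) (signedSeq n w)) i =
        rowEv (rsShape (2 * n) (signedSeq n (w * signChange))) i := by
    rw [signedSeq_mul_signChange]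
    exact (hw.isCentred_signedSeq hn hpos).rowEv_rsShape_centralSwap
      (w.injective.comp (strictMono_signedLabel n).injective).injOn hi
  rcases lt_or_ge 0 (w 1) with hpos | hneg
  · exact hswap hw hpos
  · have hne := (hw.2 1 le_rfl (by omega)).1
    have hpos : 0 < (w * signChange) 1 := by
      simp only [Equiv.Perm.mul_apply, signChange, Equiv.swap_apply_left, hw.1]
      grind
    have := hswap (hw.mul (isSignedPerm_signChange n)) hpos
    rwa [mul_assoc, signChange, Equiv.swap_mul_self, mul_one, eq_comm] at this

lemma _root_.IsSignedPerm.greeneC_signedSeq_le_inv (hw : IsSignedPerm n w) (k : ℕ) :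
    greeneC (2 * n) (signedSeq n w) k ≤ greeneC (2 * n) (signedSeq n w⁻¹) k := by
  have hmem : ∀ i ∈ Finset.Icc 1 (2 * n), signedSeq n w i ∈ signedLabels n :=
    fun i hi => (isSignedPerm_iff.1 hw).2 (signedLabel_mem hi)
  have hinv : ∀ i ∈ Finset.Icc 1 (2 * n),
      signedSeq n w⁻¹ (labelPosition n (signedSeq n w i)) = signedLabel n i := fun i hi => by
    rw [signedSeq, signedLabel_labelPosition (hmem i hi), signedSeq,
      Equiv.Perm.coe_inv, Equiv.symm_apply_apply]
  refine greeneC_le_of_transpose (φ := fun i => labelPosition n (signedSeq n w i))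
    (fun i hi => labelPosition_mem (hmem i hi)) (fun i hi j hj hij => ?_)
    (fun i hi j hj hij => ?_) (fun i hi j hj hij => ?_) k
  · have := congrArg (signedSeq n w⁻¹) hij
    rw [hinv i hi, hinv j hj] at this
    exact (strictMono_signedLabel n).injective this
  · have := strictMono_signedLabel n hij
    rwa [signedLabel_labelPosition (hmem i hi), signedLabel_labelPosition (hmem j hj)] at this
  · rw [hinv i hi, hinv j hj]
    exact (strictMono_signedLabel n).monotone hij

lemma _root_.IsSignedPerm.rsShape_signedSeq_inv (hw : IsSignedPerm n w) :
    rsShape (2 * n) (signedSeq n w⁻¹) = rsShape (2 * n) (signedSeq n w) := by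
  have hC (k : ℕ) : greeneC (2 * n) (signedSeq n w⁻¹) k = greeneC (2 * n) (signedSeq n w) k :=
    le_antisymm (by simpa using hw.inv.greeneC_signedSeq_le_inv k) (hw.greeneC_signedSeq_le_inv k)
  funext k
  rw [rsShape, rsShape, hC, hC]

lemma _root_.IsSignedPerm.rowEv_rsShape_signChange_mul (hw : IsSignedPerm n w) (hi : 1 ≤ i) :
    rowEv (rsShape (2 * n) (signedSeq n w)) i =
      rowEv (rsShape (2 * n) (signedSeq n (signChange * w))) i := by
  have hinv : (signChange * w)⁻¹ = w⁻¹ * signChange := by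
    rw [mul_inv_rev, signChange, Equiv.swap_inv]
  rw [← hw.rsShape_signedSeq_inv,
    ← ((isSignedPerm_signChange n).mul hw).rsShape_signedSeq_inv, hinv]
  exact hw.inv.rowEv_rsShape_mul_signChange hi

end SignedPermutations

end HollowTableau

/-- for `w ∈ W_n`, the shapes `p(⁻w⃗)`, `p(⁻(tw)⃗)` and `p(⁻(wt)⃗)`
have the same number of even boxes in each row, where `(tw)⃗` flips the sign of the
entry of `w⃗` with absolute value `1` and `(wt)⃗` flips the sign of the first entry. -/
theorem hollow_tableau_sign_invariance (n : ℕ) (w : Equiv.Perm ℤ) (hw : IsSignedPerm n w) :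
    ∀ i, 1 ≤ i →
      rowEv (rsShape (2 * n) (preMinus n (fun k => w (k : ℤ)))) i =
        rowEv (rsShape (2 * n)
          (preMinus n (fun k => if |w (k : ℤ)| = 1 then -w (k : ℤ) else w (k : ℤ)))) i ∧
      rowEv (rsShape (2 * n) (preMinus n (fun k => w (k : ℤ)))) i =
        rowEv (rsShape (2 * n)
          (preMinus n (fun k => if k = 1 then -w (k : ℤ) else w (k : ℤ)))) i := by
  intro i hi
  have ht := HollowTableau.isSignedPerm_signChange n
  have htw : (fun k : ℕ => if |w (k : ℤ)| = 1 then -w (k : ℤ) else w (k : ℤ)) =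
      fun k : ℕ => (HollowTableau.signChange * w) (k : ℤ) := by
    funext k
    rw [Equiv.Perm.mul_apply, HollowTableau.signChange_apply]
  have hwt : (fun k : ℕ => if k = 1 then -w (k : ℤ) else w (k : ℤ)) =
      fun k : ℕ => (w * HollowTableau.signChange) (k : ℤ) := by
    funext k
    simp only [Equiv.Perm.mul_apply, HollowTableau.signChange_apply, Nat.abs_cast, Nat.cast_eq_one]
    split_ifs <;> simp [hw.1]
  rw [htw, hwt, hw.preMinus_eq, (ht.mul hw).preMinus_eq, (hw.mul ht).preMinus_eq]
  exact ⟨hw.rowEv_rsShape_signChange_mul hi, hw.rowEv_rsShape_mul_signChange hi⟩
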